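/- Let p : ℕ×ℕ → ℕ be finitely supported and suppose p(a,b) ≥ p(a+1,b) and p(a,b) ≥ p(a,b+1) for all a,b ∈ ℕ. Then Σ_{a,b ≥ 0} (p(a,b) − p(a+1,b) − p(a,b+1) + p(a+1,b+1))² ≥ p(0,0), where the second differences are computed in ℤ and the sum is finite because p is finitely supported. -/

import Mathlib

/-- The mixed second differences of an integer array telescope over a rectangle. -/
theorem sum_mixed_second_difference (f : ℕ → ℕ → ℤ) (m n : ℕ) :
    ∑ a ∈ Finset.range m, ∑ b ∈ Finset.range n,
      (f a b - f (a + 1) b - f a (b + 1) + f (a + 1) (b + 1)) =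
        f 0 0 - f m 0 - f 0 n + f m n := by
  have inner (a : ℕ) : ∑ b ∈ Finset.range n,
      (f a b - f (a + 1) b - f a (b + 1) + f (a + 1) (b + 1)) =
        (f a 0 - f a n) - (f (a + 1) 0 - f (a + 1) n) := by
    rw [← Finset.sum_range_sub' (f a), ← Finset.sum_range_sub' (f (a + 1)),
      ← Finset.sum_sub_distrib]
    exact Finset.sum_congr rfl fun b _ => by ring
  simp only [inner]
  rw [Finset.sum_range_sub' (fun a => f a 0 - f a n)]
  ring

/-- A finitely supported function on `ℕ × ℕ` vanishes outside some square. -/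
theorem Finsupp.exists_forall_le_eq_zero (p : (ℕ × ℕ) →₀ ℕ) :
    ∃ N : ℕ, ∀ a b : ℕ, N ≤ a ∨ N ≤ b → p (a, b) = 0 := by
  refine ⟨p.support.sup (fun x => max x.1 x.2) + 1, fun a b hab => ?_⟩
  by_contra h
  have := Finset.le_sup (f := fun x : ℕ × ℕ => max x.1 x.2) (Finsupp.mem_support_iff.2 h)
  grind

/-!
STATEMENT 1. For a finitely supported `p : ℕ×ℕ → ℕ` which is nonincreasing in
each argument, the sum of the squared mixed second differences (computed in ℤ)
is at least `p (0,0)`: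
  Σ_{a,b ≥ 0} (p(a,b) − p(a+1,b) − p(a,b+1) + p(a+1,b+1))² ≥ p(0,0).
The (finite) sum is expressed with `∑ᶠ`, which is legitimate since `p` is
finitely supported, hence so is the second difference.
-/

theorem stmt1 (p : (ℕ × ℕ) →₀ ℕ)
    (h1 : ∀ a b : ℕ, p (a + 1, b) ≤ p (a, b))
    (h2 : ∀ a b : ℕ, p (a, b + 1) ≤ p (a, b)) :
    (p (0, 0) : ℤ) ≤
      ∑ᶠ a : ℕ, ∑ᶠ b : ℕ,
        ((p (a, b) : ℤ) - (p (a + 1, b) : ℤ) - (p (a, b + 1) : ℤ)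
          + (p (a + 1, b + 1) : ℤ)) ^ 2 := by
  obtain ⟨N, hN⟩ := p.exists_forall_le_eq_zero
  have finsum_eq (g : ℕ → ℤ) (hg : ∀ a, N ≤ a → g a = 0) :
      ∑ᶠ a, g a = ∑ a ∈ Finset.range N, g a :=
    finsum_eq_sum_of_support_subset g fun a ha => by
      by_contra h
      exact ha (hg a (by simpa using h))
  have inner (a : ℕ) := finsum_eq
    (fun b => ((p (a, b) : ℤ) - p (a + 1, b) - p (a, b + 1) + p (a + 1, b + 1)) ^ 2)
    fun b hb => by
      simp [hN _ b (.inr hb), hN _ (b + 1) (.inr (by omega))]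
  simp only [inner]
  rw [finsum_eq _ fun a ha => Finset.sum_eq_zero fun b _ => by
    simp [hN a _ (.inl ha), hN (a + 1) _ (.inl (by omega))]]
  have telescope := sum_mixed_second_difference (fun a b => (p (a, b) : ℤ)) N N
  simp only [hN N _ (.inl le_rfl), hN _ N (.inr le_rfl), Nat.cast_zero, sub_zero,
    add_zero] at telescope
  rw [← telescope]
  exact Finset.sum_le_sum fun a _ => Finset.sum_le_sum fun b _ => Int.le_self_sq _
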